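/- arXiv:1504.04396 — 2 statements merged into one kernel-verified Lean document; each statement's English description precedes it below -/
import Mathlib

section
/- Suppose in addition that rational numbers m_j ∈ [0,1) and nonnegative integers M_j are given with a^j = m_j + M_j for each 1 ≤ j ≤ N. Let I_m^{reg}(τ) = Σ_{k₀≥0} A_{k₀}(m)·τ^{r(k₀/d+λ)} and I_a^{reg}(τ) = Σ_{k₀≥0} A_{k₀}(a)·τ^{r(k₀/d+λ)} denote the regularized I-functions with parameters (m₁,…,m_N) and (a¹,…,a^N) respectively. Then for all τ ∈ (0, R), [∏_{j=1}^N ∏_{l=0}^{M_j−1}(−(c_j/r)·θ − l − m_j)] I_m^{reg}(τ) = I_a^{reg}(τ), where θ is the Euler operator θf(τ) = τ·f′(τ) and the product denotes the composition of the indicated commuting first-order operators. -/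
/-- The Euler operator `θ f (τ) = τ · f′(τ)` on real-valued functions of a real variable. -/
noncomputable def eulerOpR (f : ℝ → ℝ) : ℝ → ℝ := fun τ => τ * deriv f τ

/-- The composition, over a list of pairs `(α, β)`, of the commuting first-order operators
`α·θ + β` (the head of the list acting outermost). -/
noncomputable def opProdR (L : List (ℝ × ℝ)) (f : ℝ → ℝ) : ℝ → ℝ :=
  L.foldr (fun p g τ => p.1 * eulerOpR g τ + p.2 * g τ) f

/-!
On a power `τ ^ e` the operator `α θ + β` acts by the scalar `α e + β`, so it acts coefficientwise
on a convergent series `∑ A k * τ ^ e k` with nonnegative exponents. With `x = k / d + λ` and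
`e = r x`, the operators of the theorem act on the `k`-th term by `∏ j, ∏ l < M j, (z j - l)`, where
`z j = -(c j * x) - m j`; by the recurrence of `1 / Γ` this is the factor that turns
`1 / Γ (1 + z j)` into `1 / Γ (1 + z j - M j)`.

Convergence is a ratio test with step `d`: replacing `k` by `k + d` replaces `x` by `x + 1`, which
shifts all Gamma arguments by integers, and the ratio of the coefficients tends to `± R ^ (-r)`.

The numerators depend on `k` only through `⟨k q j + b j⟩`. They are `d`-periodic in `k` and
unchanged when `b j` moves by an integer, so any `d`-periodic weight can take their place.
-/

open Filter Finset Set Topology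
open Real (Gamma)

section EulerOperator

variable {ι : Type*} {A e : ι → ℝ} {F : ℝ → ℝ} {R : ℝ}

theorem mul_rpow_le_inv_log_mul_rpow {s t : ℝ} (hs : 0 < s) (hst : s < t) (x : ℝ) :
    x * s ^ x ≤ (Real.log (t / s))⁻¹ * t ^ x := by
  have hlog : 0 < Real.log (t / s) := Real.log_pos ((one_lt_div hs).2 hst)
  have hratio : Real.log (t / s) * x ≤ (t / s) ^ x := by
    rw [Real.rpow_def_of_pos (div_pos (hs.trans hst) hs)]
    linarith [Real.add_one_le_exp (Real.log (t / s) * x)]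
  rw [Real.div_rpow (hs.trans hst).le hs.le, le_div_iff₀ (Real.rpow_pos_of_pos hs x)] at hratio
  rw [le_inv_mul_iff₀ hlog]
  linarith

theorem summable_mul_exponent_mul_rpow (he : ∀ k, 0 ≤ e k)
    (hA : ∀ t ∈ Ioo 0 R, Summable fun k => A k * t ^ e k) {t : ℝ} (ht : t ∈ Ioo 0 R) :
    Summable fun k => A k * e k * t ^ e k := by
  obtain ⟨u, htu, huR⟩ := exists_between ht.2
  have hu : Summable fun k => |A k * u ^ e k| := (hA u ⟨ht.1.trans htu, huR⟩).abs
  refine (hu.mul_left (Real.log (u / t))⁻¹).of_norm_bounded fun k => ?_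
  calc ‖A k * e k * t ^ e k‖ = |A k| * (e k * t ^ e k) := by
        rw [Real.norm_eq_abs, mul_assoc, abs_mul,
          abs_of_nonneg (mul_nonneg (he k) (Real.rpow_nonneg ht.1.le _))]
    _ ≤ |A k| * ((Real.log (u / t))⁻¹ * u ^ e k) :=
        mul_le_mul_of_nonneg_left (mul_rpow_le_inv_log_mul_rpow ht.1 htu _) (abs_nonneg _)
    _ = (Real.log (u / t))⁻¹ * |A k * u ^ e k| := by
        rw [abs_mul, abs_of_nonneg (Real.rpow_nonneg (ht.1.trans htu).le _)]
        ring

theorem hasDerivAt_tsum_mul_rpow (he : ∀ k, 0 ≤ e k)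
    (hA : ∀ t ∈ Ioo 0 R, Summable fun k => A k * t ^ e k) {t : ℝ} (ht : t ∈ Ioo 0 R) :
    HasDerivAt (fun τ => ∑' k, A k * τ ^ e k) (∑' k, A k * (e k * t ^ (e k - 1))) t := by
  obtain ⟨v, hv, hvt⟩ := exists_between ht.1
  obtain ⟨u, htu, huR⟩ := exists_between ht.2
  have hu : 0 < u := ht.1.trans htu
  have hbound : Summable fun k => v⁻¹ * |A k * e k * u ^ e k| :=
    (summable_mul_exponent_mul_rpow he hA ⟨hu, huR⟩).abs.mul_left v⁻¹
  refine hasDerivAt_tsum_of_isPreconnected hbound isOpen_Ioo (isPreconnected_Ioo (a := v) (b := u))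
    (fun k y hy => (Real.hasDerivAt_rpow_const (.inl (hv.trans hy.1).ne')).const_mul (A k))
    (fun k y hy => ?_) ⟨hvt, htu⟩ (hA t ht) ⟨hvt, htu⟩
  have hy₀ : 0 < y := hv.trans hy.1
  have hpow : y ^ e k / y ≤ u ^ e k / v :=
    div_le_div₀ (by positivity) (Real.rpow_le_rpow hy₀.le hy.2.le (he k)) hv hy.1.le
  calc ‖A k * (e k * y ^ (e k - 1))‖ = |A k * e k| * (y ^ e k / y) := by
        rw [Real.norm_eq_abs, ← mul_assoc, abs_mul, Real.rpow_sub_one hy₀.ne',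
          abs_of_nonneg (a := y ^ e k / y) (by positivity)]
    _ ≤ |A k * e k| * (u ^ e k / v) := by gcongr
    _ = v⁻¹ * |A k * e k * u ^ e k| := by
        rw [abs_mul (A k * e k), abs_of_nonneg (a := u ^ e k) (by positivity)]
        ring

theorem hasSum_eulerOpR (he : ∀ k, 0 ≤ e k)
    (hF : ∀ t ∈ Ioo 0 R, HasSum (fun k => A k * t ^ e k) (F t)) {t : ℝ} (ht : t ∈ Ioo 0 R) :
    HasSum (fun k => A k * e k * t ^ e k) (eulerOpR F t) := by
  have hA : ∀ t ∈ Ioo 0 R, Summable fun k => A k * t ^ e k := fun t ht => (hF t ht).summable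
  have hFeq : F =ᶠ[𝓝 t] fun τ => ∑' k, A k * τ ^ e k := by
    filter_upwards [isOpen_Ioo.mem_nhds ht] with y hy using (hF y hy).tsum_eq.symm
  have hterm : ∀ k, t * (A k * (e k * t ^ (e k - 1))) = A k * e k * t ^ e k := fun k => by
    rw [Real.rpow_sub_one ht.1.ne']
    field [ht.1.ne']
  have heuler : eulerOpR F t = ∑' k, A k * e k * t ^ e k := by
    rw [eulerOpR, hFeq.deriv_eq, (hasDerivAt_tsum_mul_rpow he hA ht).deriv, ← tsum_mul_left]
    exact tsum_congr hterm
  exact heuler ▸ (summable_mul_exponent_mul_rpow he hA ht).hasSum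

theorem hasSum_opProdR (he : ∀ k, 0 ≤ e k)
    (hF : ∀ t ∈ Ioo 0 R, HasSum (fun k => A k * t ^ e k) (F t)) (L : List (ℝ × ℝ)) :
    ∀ t ∈ Ioo 0 R, HasSum (fun k => (L.map fun p => p.1 * e k + p.2).prod * A k * t ^ e k)
      (opProdR L F t) := by
  induction L with
  | nil => simpa [opProdR] using hF
  | cons p L ih =>
    intro t ht
    refine (((hasSum_eulerOpR he ih ht).mul_left p.1).add ((ih t ht).mul_left p.2)).congr_fun
      fun k => ?_
    rw [List.map_cons, List.prod_cons]
    ring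

end EulerOperator

section RatioTest

theorem summable_of_shift_ratio_norm_eventually_le {E : Type*} [SeminormedAddCommGroup E]
    [CompleteSpace E] {u : ℕ → E} {d : ℕ} (hd : 0 < d) {ρ : ℝ} (hρ : ρ < 1)
    (hu : ∀ᶠ k in atTop, ‖u (k + d)‖ ≤ ρ * ‖u k‖) : Summable u := by
  have : NeZero d := ⟨hd.ne'⟩
  have hclass (i : Fin d) : Summable fun n : ℕ => ‖u (n * d + i)‖ := by
    have hindex : Tendsto (fun n : ℕ => n * d + (i : ℕ)) atTop atTop :=
      tendsto_atTop_mono (fun n => le_add_right (Nat.le_mul_of_pos_right n hd)) tendsto_id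
    refine summable_of_ratio_norm_eventually_le hρ ?_
    filter_upwards [hindex.eventually hu] with n hn
    rw [norm_norm, norm_norm, show (n + 1) * d + (i : ℕ) = n * d + i + d by ring]
    exact hn
  refine Summable.of_norm ?_
  rw [← ((Equiv.prodComm _ _).trans (Nat.divModEquiv d).symm).summable_iff]
  exact (summable_prod_of_nonneg fun _ => norm_nonneg _).2 ⟨hclass, Summable.of_finite⟩

theorem summable_of_shift_ratio_tendsto {E : Type*} [SeminormedAddCommGroup E]
    [CompleteSpace E] {u : ℕ → E} {v : ℕ → ℝ} {d : ℕ} (hd : 0 < d)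
    (hu : ∀ k, ‖u (k + d)‖ = v k * ‖u k‖) {ℓ : ℝ} (hv : Tendsto v atTop (𝓝 ℓ)) (hℓ : ℓ < 1) :
    Summable u := by
  obtain ⟨ρ, hℓρ, hρ⟩ := exists_between hℓ
  refine summable_of_shift_ratio_norm_eventually_le hd hρ ?_
  filter_upwards [hv.eventually_lt_const hℓρ] with k hk
  rw [hu]
  gcongr

theorem tendsto_mul_natCast_add_div (α β : ℝ) :
    Tendsto (fun k : ℕ => (α * k + β) / k) atTop (𝓝 α) := by
  simpa [add_comm] using tendsto_add_mul_div_add_mul_atTop_nhds β 0 α one_ne_zero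

theorem tendsto_descPochhammer_eval_div_pow {f : ℕ → ℝ} {α : ℝ}
    (hf : Tendsto (fun k => f k / k) atTop (𝓝 α)) (n : ℕ) :
    Tendsto (fun k => (descPochhammer ℝ n).eval (f k) / (k : ℝ) ^ n) atTop (𝓝 (α ^ n)) := by
  induction n with
  | zero => simp
  | succ n ih =>
    have hfactor : Tendsto (fun k => (f k - n) / (k : ℝ)) atTop (𝓝 α) := by
      simpa [sub_div] using hf.sub (tendsto_const_div_atTop_nhds_zero_nat (n : ℝ))
    simpa only [descPochhammer_succ_eval, pow_succ, mul_div_mul_comm] using ih.mul hfactor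

end RatioTest

theorem inv_Gamma_eq_self_mul_inv_Gamma_add_one (x : ℝ) : (Gamma x)⁻¹ = x * (Gamma (x + 1))⁻¹ := by
  rcases eq_or_ne x 0 with rfl | hx
  · simp [Real.Gamma_zero]
  · rw [Real.Gamma_add_one hx, mul_inv, mul_inv_cancel_left₀ hx]

theorem inv_Gamma_one_add_sub_natCast (z : ℝ) (n : ℕ) :
    (Gamma (1 + z - n))⁻¹ = (descPochhammer ℝ n).eval z * (Gamma (1 + z))⁻¹ := by
  induction n with
  | zero => simp
  | succ n ih =>
    rw [inv_Gamma_eq_self_mul_inv_Gamma_add_one, Nat.cast_succ,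
      show 1 + z - (n + 1) + 1 = 1 + z - n by ring, ih, descPochhammer_succ_eval]
    ring

theorem factorial_add_eq_descPochhammer_mul (k d : ℕ) :
    ((k + d).factorial : ℝ) = (descPochhammer ℝ d).eval (k + d : ℝ) * k.factorial := by
  rw [← Nat.cast_add, descPochhammer_eval_eq_descFactorial, mul_comm,
    ← Nat.factorial_mul_descFactorial (Nat.le_add_left d k), Nat.add_sub_cancel, Nat.cast_mul]

section RegularizedIFunction

variable {ι : Type*} [Fintype ι] {c : ι → ℕ} {d r : ℕ} {lam : ℝ} {w : ℕ → ℝ} {b : ι → ℝ}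

/-- The coefficient `A_k(b)` of the regularized `I`-function, with the product of the Gamma
numerators replaced by a weight `w k`. -/
noncomputable def regICoeff (c : ι → ℕ) (d r : ℕ) (lam : ℝ) (w : ℕ → ℝ) (b : ι → ℝ) (k : ℕ) : ℝ :=
  w k / (Gamma (1 + r * (k / d + lam)) * k.factorial) *
    ∏ j, (Gamma (1 + (-(c j * (k / d + lam)) - b j)))⁻¹

/-- The radius of convergence `R = (r ^ r * d ^ d * ∏ j, c j ^ (-c j)) ^ (1 / r)` of the
regularized `I`-function. -/
noncomputable def regIRadius (c : ι → ℕ) (d r : ℕ) : ℝ :=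
  ((r : ℝ) ^ (r : ℝ) * (d : ℝ) ^ (d : ℝ) * ∏ j, (c j : ℝ) ^ (-(c j : ℝ))) ^ ((1 : ℝ) / r)

/-- The product of Gamma numerators in `A_k(b)`, the weight of the regularized `I`-function. -/
noncomputable def gammaWeight (c : ι → ℕ) (d : ℕ) (lam : ℝ) (b : ι → ℝ) (k : ℕ) : ℝ :=
  ∏ j, Gamma (1 - c j * lam - Int.fract (k * ((c j : ℝ) / d) + b j))

/-- The ratio `A_{k+d}(b) / A_k(b)` of coefficients of the regularized `I`-function, as a rational
function of `k`. -/
noncomputable def regICoeffRatio (c : ι → ℕ) (d r : ℕ) (lam : ℝ) (b : ι → ℝ) (k : ℕ) : ℝ :=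
  (∏ j, (descPochhammer ℝ (c j)).eval (-(c j * (k / d + lam)) - b j)) /
    ((descPochhammer ℝ r).eval (r * (k / d + lam) + r) * (descPochhammer ℝ d).eval (k + d : ℝ))

theorem periodic_gammaWeight (hd : 0 < d) : Function.Periodic (gammaWeight c d lam b) d := by
  intro k
  have hshift (j : ι) : ((k + d : ℕ) : ℝ) * (c j / d) + b j = k * (c j / d) + b j + c j := by
    push_cast
    field
  simp only [gammaWeight, hshift, Int.fract_add_natCast]

theorem gammaWeight_add_natCast (M : ι → ℕ) :
    gammaWeight c d lam (fun j => b j + M j) = gammaWeight c d lam b := by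
  funext k
  simp only [gammaWeight, ← add_assoc, Int.fract_add_natCast]

theorem regICoeff_gammaWeight (k : ℕ) :
    regICoeff c d r lam (gammaWeight c d lam b) b k =
      1 / (Gamma (1 + r * (k / d + lam)) * k.factorial) *
        ∏ j, Gamma (1 - c j * lam - Int.fract (k * ((c j : ℝ) / d) + b j)) /
          Gamma (1 - c j * lam - k * ((c j : ℝ) / d) - b j) := by
  have harg (j : ι) : 1 + (-(c j * (k / d + lam)) - b j) =
      1 - c j * lam - k * ((c j : ℝ) / d) - b j := by ring
  simp only [regICoeff, gammaWeight, harg, div_eq_mul_inv (Gamma _), prod_mul_distrib]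
  ring

theorem regICoeff_add_natCast (M : ι → ℕ) (k : ℕ) :
    regICoeff c d r lam w (fun j => b j + M j) k =
      (∏ j, (descPochhammer ℝ (M j)).eval (-(c j * (k / d + lam)) - b j)) *
        regICoeff c d r lam w b k := by
  have harg (j : ι) : 1 + (-(c j * (k / d + lam)) - (b j + M j)) =
      1 + (-(c j * (k / d + lam)) - b j) - M j := by ring
  simp only [regICoeff, harg, inv_Gamma_one_add_sub_natCast, prod_mul_distrib]
  ring

theorem regICoeff_add_period (hd : 0 < d) (hlam : 0 < lam) (hw : Function.Periodic w d) (k : ℕ) :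
    regICoeff c d r lam w b (k + d) =
      regICoeffRatio c d r lam b k * regICoeff c d r lam w b k := by
  have hx_succ : ((k + d : ℕ) : ℝ) / d + lam = k / d + lam + 1 := by
    push_cast
    field
  have hx_pos : 0 < k / d + lam := by positivity
  rw [regICoeff, regICoeff, regICoeffRatio, hw k, hx_succ, factorial_add_eq_descPochhammer_mul]
  generalize k / d + lam = x at hx_pos
  have hnumer (j : ι) : (Gamma (1 + (-(c j * (x + 1)) - b j)))⁻¹ =
      (descPochhammer ℝ (c j)).eval (-(c j * x) - b j) * (Gamma (1 + (-(c j * x) - b j)))⁻¹ := by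
    rw [← inv_Gamma_one_add_sub_natCast]
    ring_nf
  have hdenom : (Gamma (1 + r * x))⁻¹ =
      (descPochhammer ℝ r).eval (r * x + r) * (Gamma (1 + r * (x + 1)))⁻¹ := by
    rw [mul_add, mul_one, ← inv_Gamma_one_add_sub_natCast]
    ring_nf
  have hr_ne : (descPochhammer ℝ r).eval (r * x + r) ≠ 0 :=
    (descPochhammer_pos (by linarith [show 0 ≤ r * x by positivity])).ne'
  have hd_ne : (descPochhammer ℝ d).eval (k + d : ℝ) ≠ 0 :=
    (descPochhammer_pos (by linarith [k.cast_nonneg (α := ℝ)])).ne'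
  simp only [hnumer, prod_mul_distrib, div_eq_mul_inv, mul_inv, hdenom]
  field

theorem tendsto_regICoeffRatio (hd : 0 < d) (hr : 0 < r) (hsum : ∑ j, c j = d + r) :
    Tendsto (regICoeffRatio c d r lam b) atTop
      (𝓝 ((∏ j, (-(c j / d : ℝ)) ^ c j) / ((r / d : ℝ) ^ r * 1 ^ d))) := by
  have haffine {n : ℕ} {f : ℕ → ℝ} (α β : ℝ) (hf : ∀ k : ℕ, α * k + β = f k) :
      Tendsto (fun k => (descPochhammer ℝ n).eval (f k) / (k : ℝ) ^ n) atTop (𝓝 (α ^ n)) :=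
    tendsto_descPochhammer_eval_div_pow (by simpa only [hf] using tendsto_mul_natCast_add_div α β) n
  have hnumer := tendsto_finsetProd univ fun j _ =>
    haffine (n := c j) (f := fun k => -(c j * (k / d + lam)) - b j)
      (-(c j / d)) (-(c j * lam) - b j) fun k => by ring
  have hr_factor := haffine (n := r) (f := fun k => r * (k / d + lam) + r)
    (r / d) (r * lam + r) fun k => by ring
  have hd_factor := haffine (n := d) (f := fun k => (k + d : ℝ)) 1 d fun k => by ring
  refine (hnumer.div (hr_factor.mul hd_factor) (by positivity)).congr' ?_
  filter_upwards [eventually_gt_atTop 0] with k hk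
  have hk_pow : (k : ℝ) ^ (d + r) ≠ 0 := by positivity
  rw [Pi.div_apply, prod_div_distrib, prod_pow_eq_pow_sum, hsum, div_mul_div_comm, ← pow_add,
    add_comm r d, div_div_div_cancel_right₀ hk_pow, regICoeffRatio]

theorem prod_pow_self_pos : 0 < ∏ j, (c j : ℝ) ^ c j :=
  prod_pos fun j _ => mod_cast Nat.pow_self_pos (n := c j)

theorem regIRadius_pow (hr : 0 < r) :
    regIRadius c d r ^ r = (r : ℝ) ^ r * (d : ℝ) ^ d / ∏ j, (c j : ℝ) ^ c j := by
  have hbase : (r : ℝ) ^ (r : ℝ) * (d : ℝ) ^ (d : ℝ) * ∏ j, (c j : ℝ) ^ (-(c j : ℝ)) =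
      (r : ℝ) ^ r * (d : ℝ) ^ d / ∏ j, (c j : ℝ) ^ c j := by
    simp only [Real.rpow_neg (Nat.cast_nonneg _), Real.rpow_natCast, prod_inv_distrib,
      div_eq_mul_inv]
  rw [regIRadius, hbase, one_div, Real.rpow_inv_natCast_pow _ hr.ne']
  have := prod_pow_self_pos (c := c)
  positivity

theorem pow_mul_abs_regICoeffRatio_limit_lt_one (hd : 0 < d) (hr : 0 < r)
    (hsum : ∑ j, c j = d + r) {t : ℝ} (ht : t ∈ Ioo 0 (regIRadius c d r)) :
    t ^ r * |(∏ j, (-(c j / d : ℝ)) ^ c j) / ((r / d : ℝ) ^ r * 1 ^ d)| < 1 := by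
  have hlimit : |(∏ j, (-(c j / d : ℝ)) ^ c j) / ((r / d : ℝ) ^ r * 1 ^ d)| =
      (regIRadius c d r ^ r)⁻¹ := by
    have hprod : ∏ j, |(-(c j / d : ℝ)) ^ c j| = (∏ j, (c j : ℝ) ^ c j) / (d : ℝ) ^ (d + r) := by
      simp only [abs_pow, abs_neg, abs_div, Nat.abs_cast, div_pow, prod_div_distrib,
        prod_pow_eq_pow_sum, hsum]
    rw [abs_div, abs_prod, hprod, abs_of_pos (by positivity), regIRadius_pow hr, pow_add, div_pow]
    field
  rw [hlimit, ← div_eq_mul_inv, div_lt_one (pow_pos (ht.1.trans ht.2) r)]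
  exact pow_lt_pow_left₀ ht.2 ht.1.le hr.ne'

theorem summable_regICoeff_mul_rpow (hd : 0 < d) (hr : 0 < r) (hsum : ∑ j, c j = d + r)
    (hlam : 0 < lam) (hw : Function.Periodic w d) {t : ℝ} (ht : t ∈ Ioo 0 (regIRadius c d r)) :
    Summable fun k : ℕ => regICoeff c d r lam w b k * t ^ (r * (k / d + lam)) := by
  refine summable_of_shift_ratio_tendsto hd (fun k => ?_)
    ((tendsto_regICoeffRatio (lam := lam) (b := b) hd hr hsum).abs.const_mul (t ^ r))
    (pow_mul_abs_regICoeffRatio_limit_lt_one hd hr hsum ht)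
  have hexp : (r : ℝ) * ((k + d : ℕ) / d + lam) = r * (k / d + lam) + r := by
    push_cast
    field
  rw [regICoeff_add_period hd hlam hw, hexp, Real.rpow_add_natCast ht.1.ne', norm_mul, norm_mul,
    norm_mul, norm_mul, Real.norm_of_nonneg (pow_nonneg ht.1.le r), Real.norm_eq_abs]
  ring

end RegularizedIFunction

/-- The factors `-(c j / r) θ - l - m j`, for `l < M j`, of the differential operator that shifts
the parameters from `m` to `m + M`, encoded as for `opProdR`. -/
noncomputable def shiftFactors {N : ℕ} (c : Fin N → ℕ) (r : ℕ) (m : Fin N → ℝ) (M : Fin N → ℕ) :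
    List (ℝ × ℝ) :=
  ((List.finRange N).map fun j => (List.range (M j)).map fun l : ℕ =>
    (-(c j : ℝ) / r, -(l : ℝ) - m j)).flatten

theorem prod_map_shiftFactors {N : ℕ} {c : Fin N → ℕ} {r : ℕ} (hr : 0 < r) (m : Fin N → ℝ)
    (M : Fin N → ℕ) (x : ℝ) :
    ((shiftFactors c r m M).map fun p => p.1 * (r * x) + p.2).prod =
      ∏ j, (descPochhammer ℝ (M j)).eval (-(c j * x) - m j) := by
  have hfactor (j : Fin N) (l : ℕ) :
      -(c j : ℝ) / r * (r * x) + (-(l : ℝ) - m j) = -(c j * x) - m j - l := by field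
  simp only [shiftFactors, List.map_flatten, List.prod_flatten, List.map_map, Function.comp_def,
    hfactor, Fin.prod_univ_def, descPochhammer_eval_eq_prod_range]
  rfl

theorem stmt_13_general {N : ℕ} {c : Fin N → ℕ} {d r : ℕ} (hd : 0 < d) (hr : 0 < r)
    (hsum : ∑ j, c j = d + r) {lam : ℝ} (hlam : 0 < lam) {w : ℕ → ℝ} (hw : Function.Periodic w d)
    (m : Fin N → ℝ) (M : Fin N → ℕ) {Im : ℝ → ℝ}
    (hIm : ∀ τ ∈ Ioo 0 (regIRadius c d r),
      Im τ = ∑' k : ℕ, regICoeff c d r lam w m k * τ ^ (r * (k / d + lam))) :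
    ∀ τ ∈ Ioo 0 (regIRadius c d r),
      HasSum (fun k : ℕ => regICoeff c d r lam w (fun j => m j + M j) k * τ ^ (r * (k / d + lam)))
        (opProdR (shiftFactors c r m M) Im τ) := by
  have hIm_sum : ∀ τ ∈ Ioo 0 (regIRadius c d r),
      HasSum (fun k : ℕ => regICoeff c d r lam w m k * τ ^ (r * (k / d + lam))) (Im τ) :=
    fun τ hτ => hIm τ hτ ▸ (summable_regICoeff_mul_rpow hd hr hsum hlam hw hτ).hasSum
  simpa only [prod_map_shiftFactors hr, regICoeff_add_natCast] using
    hasSum_opProdR (fun k => by positivity) hIm_sum (shiftFactors c r m M)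

/-- second assertion of Lemma 5.6, Equation (5.7), of the paper.
Setup as in Statement 9, with in addition rationals `m_j ∈ [0,1)` and nonnegative integers
`M_j` such that `a^j = m_j + M_j`.  Let `I_m^{reg}` and `I_a^{reg}` denote the regularized
`I`-functions with parameters `(m_j)` and `(a^j)` respectively.  Then on `(0, R)`,
`[∏_j ∏_{l<M_j}(−(c_j/r)θ − l − m_j)] I_m^{reg} = I_a^{reg}`. -/
theorem stmt_13 (N : ℕ) (hN : 1 ≤ N) (c : Fin N → ℕ) (d r : ℕ)
    (hc : ∀ j, 0 < c j) (hd : 0 < d) (hdvd : ∀ j, c j ∣ d)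
    (hr : 0 < r) (hrsum : (∑ j, c j) = d + r)
    (a m : Fin N → ℚ) (ha : ∀ j, 0 ≤ a j)
    (hm : ∀ j, 0 ≤ m j ∧ m j < 1)
    (M : Fin N → ℕ) (hma : ∀ j, a j = m j + (M j : ℚ))
    (lam : ℝ) (hpos : 0 < lam) (hirr : Irrational lam)
    (Am Aa : ℕ → ℝ)
    (hAm : ∀ k₀ : ℕ, Am k₀ =
      (1 / (Real.Gamma (1 + (r : ℝ) * ((k₀ : ℝ) / (d : ℝ) + lam)) * (k₀.factorial : ℝ))) *
        ∏ j, Real.Gamma (1 - (c j : ℝ) * lam -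
              Int.fract ((k₀ : ℝ) * ((c j : ℝ) / (d : ℝ)) + (m j : ℝ))) /
          Real.Gamma (1 - (c j : ℝ) * lam - (k₀ : ℝ) * ((c j : ℝ) / (d : ℝ)) - (m j : ℝ)))
    (hAa : ∀ k₀ : ℕ, Aa k₀ =
      (1 / (Real.Gamma (1 + (r : ℝ) * ((k₀ : ℝ) / (d : ℝ) + lam)) * (k₀.factorial : ℝ))) *
        ∏ j, Real.Gamma (1 - (c j : ℝ) * lam -
              Int.fract ((k₀ : ℝ) * ((c j : ℝ) / (d : ℝ)) + (a j : ℝ))) /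
          Real.Gamma (1 - (c j : ℝ) * lam - (k₀ : ℝ) * ((c j : ℝ) / (d : ℝ)) - (a j : ℝ)))
    (R : ℝ)
    (hR : R = ((r : ℝ) ^ (r : ℝ) * (d : ℝ) ^ (d : ℝ) *
      ∏ j, (c j : ℝ) ^ (-(c j : ℝ))) ^ ((1 : ℝ) / (r : ℝ)))
    (Im Ia : ℝ → ℝ)
    (hIm : ∀ τ ∈ Set.Ioo (0 : ℝ) R,
      Im τ = ∑' k₀ : ℕ, Am k₀ * τ ^ ((r : ℝ) * ((k₀ : ℝ) / (d : ℝ) + lam)))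
    (hIa : ∀ τ ∈ Set.Ioo (0 : ℝ) R,
      Ia τ = ∑' k₀ : ℕ, Aa k₀ * τ ^ ((r : ℝ) * ((k₀ : ℝ) / (d : ℝ) + lam))) :
    ∀ τ ∈ Set.Ioo (0 : ℝ) R,
      opProdR (((List.finRange N).map (fun j => (List.range (M j)).map
          (fun l => (-(c j : ℝ) / (r : ℝ), -(l : ℝ) - (m j : ℝ))))).flatten) Im τ = Ia τ := by
  subst hR
  have ha_cast : (fun j => (a j : ℝ)) = fun j => (m j : ℝ) + M j := by
    funext j
    simp [hma]
  have hAm_eq : Am = regICoeff c d r lam (gammaWeight c d lam fun j => m j) fun j => m j :=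
    funext fun k => (hAm k).trans (regICoeff_gammaWeight k).symm
  have hAa_eq : Aa = regICoeff c d r lam (gammaWeight c d lam fun j => m j) fun j => m j + M j := by
    rw [← gammaWeight_add_natCast M, ← ha_cast]
    exact funext fun k => (hAa k).trans (regICoeff_gammaWeight k).symm
  subst hAm_eq hAa_eq
  intro τ hτ
  rw [hIa τ hτ]
  have hshift := stmt_13_general hd hr hrsum hpos (periodic_gammaWeight hd)
    (fun j => m j) M hIm τ hτ
  simpa [shiftFactors, Function.comp_def, ← List.map_eq_flatMap] using hshift.tsum_eq.symm
end

section
/- Set n = c₁+⋯+c_N. Let g : (0,∞) → C be n-times continuously differentiable satisfying: (i) the regularized Picard–Fuchs equation τ^r · [∏_{j=1}^N ∏_{l=0}^{c_j−1}(−(c_j/r)·θ − l − a^j)] g(τ) = [∏_{l=0}^{d−1}((d/r)·θ − dλ − l)] ∘ [∏_{l=0}^{r−1}(θ − l)] g(τ) for all τ > 0; (ii) g^{(j)}(τ) → 0 as τ → 0⁺ for every 0 ≤ j ≤ n; (iii) |g^{(j)}(τ)| ≤ C(1+τ)^p for all τ > 0, 0 ≤ j ≤ n, for some constants C, p. Define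 F(u) = u·∫₀^∞ e^{−uτ} g(τ) dτ for u > 0 and G(q) = F(q^{1/r}) for q > 0. Then G is infinitely differentiable on (0,∞) and satisfies [∏_{j=1}^N ∏_{l=0}^{c_j−1}(c_j·θ_q − l − a^j)] G(q) = q · [∏_{l=0}^{d−1}(−d·θ_q − dλ − l)] G(q) for all q > 0, where θ (resp. θ_q) denotes the Euler operator τ·d/dτ (resp. q·d/dq). -/
open MeasureTheory

/-- The Euler operator `θ f (τ) = τ · f′(τ)` acting on complex-valued functions of a real
variable. -/
noncomputable def eulerOpC (f : ℝ → ℂ) : ℝ → ℂ := fun τ => (τ : ℂ) * deriv f τ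

/-- The composition, over a list of pairs `(α, β)`, of the commuting first-order operators
`α·θ + β` (the head of the list acting outermost). -/
noncomputable def opProdC (L : List (ℂ × ℂ)) (f : ℝ → ℂ) : ℝ → ℂ :=
  L.foldr (fun p g τ => p.1 * eulerOpC g τ + p.2 * g τ) f

/-!
Write `A(θ)` for the operator `opProdC A`. Since `∏_{l<r} (θ - l) = τ^r ∂^r` and `τ^r` conjugates
`θ` to `θ + r`, the equation `τ^r A(θ) g = B(θ) ∏_{l<r} (θ - l) g` amounts to
`A(θ) g = B(θ + r) ∂^r g`. The transform `F(u) = u ∫₀^∞ e^{-uτ} g(τ) dτ` turns `θ` into `-θ` and, by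
the vanishing of `g` and its derivatives at `0`, turns `∂^r` into multiplication by `u^r`. Hence
`A(-θ) F = B(-θ + r) (u^r F) = u^r B(-θ) F`, the two shifts by `r` cancelling, and the substitution
`q = u^r` replaces `θ` by `r θ_q`.
-/

section

open Set Filter Topology Asymptotics

/-! ### Products of Euler operators -/

section EulerOperator

variable {s : Set ℝ} {f h : ℝ → ℂ}

lemma eqOn_iterate_deriv (hs : IsOpen s) (hfh : EqOn f h s) (j : ℕ) :
    EqOn (deriv^[j] f) (deriv^[j] h) s := by
  induction j with
  | zero => exact hfh
  | succ j ih => simpa only [Function.iterate_succ_apply'] using ih.deriv hs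

lemma contDiffOn_iterate_deriv (hs : IsOpen s) {k j : ℕ} (hf : ContDiffOn ℝ (k + j : ℕ) f s) :
    ContDiffOn ℝ k (deriv^[j] f) s := by
  induction j generalizing f with
  | zero => exact hf
  | succ j ih => exact ih (hf.deriv_of_isOpen hs (by norm_cast))

lemma eulerOpC_congr (hs : IsOpen s) (hfh : EqOn f h s) :
    EqOn (eulerOpC f) (eulerOpC h) s := fun τ hτ => by
  simp only [eulerOpC, hfh.deriv hs hτ]

lemma hasDerivAt_ofReal_mul {x : ℝ} (hf : DifferentiableAt ℝ f x) :
    HasDerivAt (fun τ : ℝ => (τ : ℂ) * f τ) (f x + eulerOpC f x) x := by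
  simpa [eulerOpC] using (hasDerivAt_id x).ofReal_comp.fun_mul hf.hasDerivAt

lemma eulerOpC_pow_mul {x : ℝ} (hf : DifferentiableAt ℝ f x) (r : ℕ) :
    eulerOpC (fun τ => (τ : ℂ) ^ r * f τ) x = (x : ℂ) ^ r * (eulerOpC f x + r * f x) := by
  have hpow : HasDerivAt (fun τ : ℝ => (τ : ℂ) ^ r) (r * (x : ℂ) ^ (r - 1)) x := by
    simpa using (hasDerivAt_pow r x).ofReal_comp
  simp only [eulerOpC, (hpow.fun_mul hf.hasDerivAt).deriv]
  rcases r with _ | r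
  · simp
  · rw [Nat.add_sub_cancel, pow_succ]
    ring

lemma eulerOpC_comp_rpow {x t : ℝ} (hx : 0 < x) (hf : DifferentiableAt ℝ f (x ^ t)) :
    eulerOpC (fun q => f (q ^ t)) x = t * eulerOpC f (x ^ t) := by
  have hderiv : HasDerivAt (fun q => f (q ^ t)) ((t * x ^ (t - 1)) • deriv f (x ^ t)) x :=
    hf.hasDerivAt.scomp x (Real.hasDerivAt_rpow_const (Or.inl hx.ne'))
  have hpow : x ^ t = x * x ^ (t - 1) := by
    rw [Real.rpow_sub_one hx.ne', mul_div_cancel₀ _ hx.ne']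
  simp only [eulerOpC, hderiv.deriv, Complex.real_smul]
  rw [hpow]
  push_cast
  ring

lemma contDiffOn_eulerOpC (hs : IsOpen s) {k : ℕ} (hf : ContDiffOn ℝ (k + 1 : ℕ) f s) :
    ContDiffOn ℝ k (eulerOpC f) s :=
  Complex.ofRealCLM.contDiff.contDiffOn.mul (hf.deriv_of_isOpen hs (by norm_cast))

lemma opProdC_cons (p : ℂ × ℂ) (L : List (ℂ × ℂ)) (f : ℝ → ℂ) :
    opProdC (p :: L) f = fun τ => p.1 * eulerOpC (opProdC L f) τ + p.2 * opProdC L f τ := rfl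

lemma opProdC_append (L M : List (ℂ × ℂ)) (f : ℝ → ℂ) :
    opProdC (L ++ M) f = opProdC L (opProdC M f) :=
  List.foldr_append

lemma opProdC_congr (hs : IsOpen s) (L : List (ℂ × ℂ)) (hfh : EqOn f h s) :
    EqOn (opProdC L f) (opProdC L h) s := by
  induction L with
  | nil => exact hfh
  | cons p L ih =>
    intro τ hτ
    simp only [opProdC_cons, ih hτ, eulerOpC_congr hs ih hτ]

lemma contDiffOn_opProdC (hs : IsOpen s) (L : List (ℂ × ℂ)) {k : ℕ}
    (hf : ContDiffOn ℝ (k + L.length : ℕ) f s) : ContDiffOn ℝ k (opProdC L f) s := by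
  induction L generalizing k with
  | nil => exact hf
  | cons p L ih =>
    have hL : ContDiffOn ℝ (k + 1 : ℕ) (opProdC L f) s :=
      ih (by rwa [List.length_cons, ← add_assoc, add_right_comm] at hf)
    exact (contDiffOn_const.mul (contDiffOn_eulerOpC hs hL)).add
      (contDiffOn_const.mul (hL.of_le (by norm_cast; exact k.le_succ)))

lemma differentiableAt_opProdC (hs : IsOpen s) {L : List (ℂ × ℂ)}
    (hf : ContDiffOn ℝ (L.length + 1 : ℕ) f s) {x : ℝ} (hx : x ∈ s) :
    DifferentiableAt ℝ (opProdC L f) x :=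
  ((contDiffOn_opProdC hs L (k := 1) (by rwa [add_comm])).differentiableOn
    (by simp)).differentiableAt (hs.mem_nhds hx)

lemma opProdC_pow_mul (hs : IsOpen s) (r : ℕ) (L : List (ℂ × ℂ))
    (hf : ContDiffOn ℝ L.length f s) :
    EqOn (opProdC L fun τ => (τ : ℂ) ^ r * f τ)
      (fun τ => (τ : ℂ) ^ r * opProdC (L.map fun p => (p.1, p.2 + r * p.1)) f τ) s := by
  induction L with
  | nil => exact fun τ _ => rfl
  | cons p L ih =>
    have hL := ih (hf.of_le (by simp))
    intro τ hτ
    have hdiff : DifferentiableAt ℝ (opProdC (L.map fun p => (p.1, p.2 + r * p.1)) f) τ :=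
      differentiableAt_opProdC hs (by simpa using hf) hτ
    simp only [opProdC_cons, List.map_cons, hL hτ, eulerOpC_congr hs hL hτ,
      eulerOpC_pow_mul hdiff]
    ring

lemma opProdC_comp_rpow (t : ℝ) (L : List (ℂ × ℂ)) (hf : ContDiffOn ℝ L.length f (Ioi 0)) :
    EqOn (opProdC L fun q => f (q ^ t))
      (fun q => opProdC (L.map fun p => (t * p.1, p.2)) f (q ^ t)) (Ioi 0) := by
  induction L with
  | nil => exact fun q _ => rfl
  | cons p L ih =>
    have hL := ih (hf.of_le (by simp))
    intro q hq
    have hdiff : DifferentiableAt ℝ (opProdC (L.map fun p => (t * p.1, p.2)) f) (q ^ t) :=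
      differentiableAt_opProdC isOpen_Ioi (by simpa using hf) (Real.rpow_pos_of_pos hq t)
    simp only [opProdC_cons, List.map_cons, hL hq, eulerOpC_congr isOpen_Ioi hL hq,
      eulerOpC_comp_rpow hq hdiff]
    ring

lemma iterate_deriv_eulerOpC_sub (hs : IsOpen s) (j : ℕ) (hf : ContDiffOn ℝ (j + 1 : ℕ) f s) :
    EqOn (deriv^[j] fun τ => eulerOpC f τ - j * f τ) (fun τ => (τ : ℂ) * deriv^[j + 1] f τ) s := by
  induction j generalizing f with
  | zero => intro τ _; simp [eulerOpC]
  | succ j ih =>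
    have hf' : ContDiffOn ℝ (j + 1 : ℕ) (deriv f) s := hf.deriv_of_isOpen hs (by norm_cast)
    have hderiv : EqOn (deriv fun τ => eulerOpC f τ - (j + 1 : ℕ) * f τ)
        (fun τ => eulerOpC (deriv f) τ - j * deriv f τ) s := fun τ hτ => by
      have hdf : DifferentiableAt ℝ f τ :=
        (hf.differentiableOn (by simp)).differentiableAt (hs.mem_nhds hτ)
      have hdf' : DifferentiableAt ℝ (deriv f) τ :=
        (hf'.differentiableOn (by simp)).differentiableAt (hs.mem_nhds hτ)
      refine ((hasDerivAt_ofReal_mul hdf').fun_sub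
        (hdf.hasDerivAt.const_mul ((j + 1 : ℕ) : ℂ))).deriv.trans ?_
      push_cast
      ring
    exact (eqOn_iterate_deriv hs hderiv j).trans (ih hf')

lemma opProdC_range_eq_pow_mul_iterate_deriv (hs : IsOpen s) (j : ℕ) (hf : ContDiffOn ℝ j f s) :
    EqOn (opProdC ((List.range j).map fun l : ℕ => (1, -(l : ℂ))) f)
      (fun τ => (τ : ℂ) ^ j * deriv^[j] f τ) s := by
  induction j generalizing f with
  | zero => intro τ _; simp [opProdC]
  | succ j ih =>
    have hinner : opProdC [(1, -(j : ℂ))] f = fun τ => eulerOpC f τ - j * f τ := by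
      funext τ
      simp only [opProdC, List.foldr_cons, List.foldr_nil]
      ring
    have hsmooth : ContDiffOn ℝ j (fun τ => eulerOpC f τ - j * f τ) s :=
      hinner ▸ contDiffOn_opProdC hs [_] hf
    intro τ hτ
    rw [List.range_succ, List.map_append, opProdC_append, List.map_singleton, hinner,
      ih hsmooth hτ]
    simp only [iterate_deriv_eulerOpC_sub hs j hf hτ, pow_succ, mul_assoc]

lemma opProdC_eq_of_pow_mul_eq {A B : List (ℂ × ℂ)} {r : ℕ}
    (hf : ContDiffOn ℝ (B.length + r : ℕ) f (Ioi 0))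
    (hode : ∀ τ : ℝ, 0 < τ → (τ : ℂ) ^ r * opProdC A f τ =
      opProdC B (opProdC ((List.range r).map fun l : ℕ => (1, -(l : ℂ))) f) τ) :
    EqOn (opProdC A f) (opProdC (B.map fun p => (p.1, p.2 + r * p.1)) (deriv^[r] f)) (Ioi 0) := by
  intro τ hτ
  have hτr : (τ : ℂ) ^ r ≠ 0 := pow_ne_zero r (Complex.ofReal_ne_zero.2 (ne_of_gt hτ))
  have hfall := opProdC_range_eq_pow_mul_iterate_deriv isOpen_Ioi r
    (hf.of_le (by norm_cast; exact Nat.le_add_left r _))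
  have hfr : ContDiffOn ℝ B.length (deriv^[r] f) (Ioi 0) := contDiffOn_iterate_deriv isOpen_Ioi hf
  refine mul_left_cancel₀ hτr ?_
  rw [hode τ hτ, opProdC_congr isOpen_Ioi B hfall hτ, opProdC_pow_mul isOpen_Ioi r B hfr hτ]

end EulerOperator

/-! ### Functions of subexponential growth -/

/-- Subexponential growth on the half-line: `f τ = O(exp (ε τ))` uniformly over all `τ > 0`, for
every `ε > 0`. In particular `f` is bounded near `0`. -/
def SubexpGrowth {E : Type*} [NormedAddCommGroup E] (f : ℝ → E) : Prop :=
  ∀ ε : ℝ, 0 < ε → f =O[𝓟 (Ioi 0)] fun τ => Real.exp (ε * τ)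

namespace SubexpGrowth

section NormedAddCommGroup

variable {E : Type*} [NormedAddCommGroup E] {f h : ℝ → E}

lemma of_isBigO {F : Type*} [NormedAddCommGroup F] {m : ℝ → F} (hfm : f =O[𝓟 (Ioi 0)] m)
    (hm : SubexpGrowth m) : SubexpGrowth f := fun ε hε => hfm.trans (hm ε hε)

protected lemma congr (hf : SubexpGrowth f) (hfh : EqOn f h (Ioi 0)) : SubexpGrowth h := fun ε hε =>
  (hf ε hε).congr' (eventually_principal.2 hfh) EventuallyEq.rfl

lemma add (hf : SubexpGrowth f) (hh : SubexpGrowth h) : SubexpGrowth (fun τ => f τ + h τ) :=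
  fun ε hε => (hf ε hε).add (hh ε hε)

lemma const (c : E) : SubexpGrowth (fun _ => c) := fun ε hε =>
  IsBigO.of_bound ‖c‖ <| eventually_principal.2 fun τ (hτ : 0 < τ) =>
    le_mul_of_one_le_right (norm_nonneg c) <| by
      simpa using (mul_pos hε hτ).le

end NormedAddCommGroup

protected lemma id : SubexpGrowth (fun τ : ℝ => τ) := fun ε hε =>
  IsBigO.of_bound ε⁻¹ <| eventually_principal.2 fun τ (hτ : 0 < τ) => by
    rw [Real.norm_of_nonneg hτ.le, Real.norm_of_nonneg (Real.exp_nonneg _),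
      le_inv_mul_iff₀ hε]
    linarith [Real.add_one_le_exp (ε * τ)]

section NormedRing

variable {R : Type*} [NormedRing R] {f h : ℝ → R}

lemma mul (hf : SubexpGrowth f) (hh : SubexpGrowth h) : SubexpGrowth (fun τ => f τ * h τ) :=
  fun ε hε => ((hf (ε / 2) (half_pos hε)).mul (hh (ε / 2) (half_pos hε))).congr_right fun τ => by
    rw [← Real.exp_add, ← add_mul, add_halves]

lemma pow (hf : SubexpGrowth f) (m : ℕ) : SubexpGrowth (fun τ => f τ ^ m) := by
  induction m with
  | zero => simpa only [pow_zero] using const (1 : R)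
  | succ m ih => simpa only [pow_succ] using ih.mul hf

end NormedRing

lemma of_norm_le_rpow {E : Type*} [NormedAddCommGroup E] {f : ℝ → E} {C p : ℝ}
    (hf : ∀ τ : ℝ, 0 < τ → ‖f τ‖ ≤ C * (1 + τ) ^ p) : SubexpGrowth f := by
  obtain ⟨m, hm⟩ := exists_nat_ge p
  refine of_isBigO (IsBigO.of_bound |C| <| eventually_principal.2 fun τ (hτ : 0 < τ) => ?_)
    (((const 1).add SubexpGrowth.id).pow m)
  rw [Real.norm_of_nonneg (by positivity), ← Real.rpow_natCast]
  exact (hf τ hτ).trans <| mul_le_mul (le_abs_self C)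
    (Real.rpow_le_rpow_of_exponent_le (by linarith) hm) (by positivity) (abs_nonneg C)

lemma ofReal : SubexpGrowth (fun τ : ℝ => (τ : ℂ)) :=
  of_isBigO (isBigO_of_le _ fun τ => (Complex.norm_real τ).le) SubexpGrowth.id

lemma tendsto_ofReal_mul {f : ℝ → ℂ} (hf : SubexpGrowth f) :
    Tendsto (fun τ : ℝ => (τ : ℂ) * f τ) (𝓝[>] 0) (𝓝 0) := by
  have hexp : Tendsto (fun τ : ℝ => Real.exp (1 * τ)) (𝓝[>] 0) (𝓝 (Real.exp (1 * 0))) :=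
    ((by fun_prop : Continuous fun τ : ℝ => Real.exp (1 * τ)).tendsto 0).mono_left
      nhdsWithin_le_nhds
  have hbdd : f =O[𝓝[>] 0] fun _ => (1 : ℝ) :=
    ((hf 1 one_pos).mono inf_le_right).trans (hexp.isBigO_one ℝ)
  have hofReal : Tendsto (fun τ : ℝ => (τ : ℂ)) (𝓝[>] 0) (𝓝 0) :=
    (Complex.continuous_ofReal.tendsto' 0 0 Complex.ofReal_zero).mono_left nhdsWithin_le_nhds
  exact hofReal.zero_mul_isBoundedUnder_le ((isBigO_one_iff ℝ).1 hbdd)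

end SubexpGrowth

/-- The functions of class `C^k` on the half-line all of whose derivatives of order at most `k`
grow subexponentially, the class on which the Laplace transform is calculated. -/
structure SubexpContDiff (k : ℕ) (f : ℝ → ℂ) : Prop where
  contDiffOn : ContDiffOn ℝ k f (Ioi 0)
  subexpGrowth_iterate_deriv : ∀ j ≤ k, SubexpGrowth (deriv^[j] f)

namespace SubexpContDiff

variable {k l : ℕ} {f h : ℝ → ℂ}

lemma subexpGrowth (hf : SubexpContDiff k f) : SubexpGrowth f :=
  hf.subexpGrowth_iterate_deriv 0 k.zero_le

lemma aestronglyMeasurable (hf : SubexpContDiff k f) :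
    AEStronglyMeasurable f (volume.restrict (Ioi 0)) :=
  hf.contDiffOn.continuousOn.aestronglyMeasurable measurableSet_Ioi

lemma of_le (hf : SubexpContDiff k f) (hlk : l ≤ k) : SubexpContDiff l f where
  contDiffOn := hf.contDiffOn.of_le (by exact_mod_cast hlk)
  subexpGrowth_iterate_deriv j hj := hf.subexpGrowth_iterate_deriv j (hj.trans hlk)

lemma differentiableAt (hf : SubexpContDiff (k + 1) f) {x : ℝ} (hx : 0 < x) :
    DifferentiableAt ℝ f x :=
  (hf.contDiffOn.differentiableOn (by simp)).differentiableAt (Ioi_mem_nhds hx)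

lemma iterate_deriv {j : ℕ} (hf : SubexpContDiff (k + j) f) : SubexpContDiff k (deriv^[j] f) where
  contDiffOn := contDiffOn_iterate_deriv isOpen_Ioi hf.contDiffOn
  subexpGrowth_iterate_deriv i hi := by
    rw [← Function.iterate_add_apply]
    exact hf.subexpGrowth_iterate_deriv (i + j) (by lia)

protected lemma deriv (hf : SubexpContDiff (k + 1) f) : SubexpContDiff k (deriv f) :=
  hf.iterate_deriv (j := 1)

lemma zero_of_continuousOn (hf : ContinuousOn f (Ioi 0)) (hf' : SubexpGrowth f) :
    SubexpContDiff 0 f where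
  contDiffOn := contDiffOn_zero.2 hf
  subexpGrowth_iterate_deriv j hj := by rwa [Nat.le_zero.1 hj]

lemma succ_of_deriv (hf : DifferentiableOn ℝ f (Ioi 0)) (hf' : SubexpGrowth f)
    (hderiv : SubexpContDiff k (deriv f)) : SubexpContDiff (k + 1) f where
  contDiffOn := by
    push_cast
    exact (contDiffOn_succ_iff_deriv_of_isOpen isOpen_Ioi).2 ⟨hf, by simp, hderiv.contDiffOn⟩
  subexpGrowth_iterate_deriv
    | 0, _ => hf'
    | j + 1, hj => hderiv.subexpGrowth_iterate_deriv j (Nat.le_of_succ_le_succ hj)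

protected lemma congr (hf : SubexpContDiff k f) (hfh : EqOn f h (Ioi 0)) : SubexpContDiff k h where
  contDiffOn := hf.contDiffOn.congr hfh.symm
  subexpGrowth_iterate_deriv j hj :=
    (hf.subexpGrowth_iterate_deriv j hj).congr (eqOn_iterate_deriv isOpen_Ioi hfh j)

lemma const (c : ℂ) : SubexpContDiff k (fun _ => c) := by
  induction k generalizing c with
  | zero => exact zero_of_continuousOn continuousOn_const (.const c)
  | succ k ih =>
    refine succ_of_deriv (differentiableOn_const c) (.const c) ?_
    simpa only [deriv_const'] using ih 0

lemma ofReal : SubexpContDiff k (fun τ : ℝ => (τ : ℂ)) := by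
  cases k with
  | zero => exact zero_of_continuousOn Complex.continuous_ofReal.continuousOn .ofReal
  | succ k =>
    refine succ_of_deriv Complex.ofRealCLM.differentiable.differentiableOn .ofReal
      ((const 1).congr fun τ _ => ?_)
    exact Complex.ofRealCLM.hasDerivAt.deriv.symm

lemma add (hf : SubexpContDiff k f) (hh : SubexpContDiff k h) :
    SubexpContDiff k (fun τ => f τ + h τ) := by
  induction k generalizing f h with
  | zero =>
    exact zero_of_continuousOn (hf.contDiffOn.continuousOn.add hh.contDiffOn.continuousOn)
      (hf.subexpGrowth.add hh.subexpGrowth)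
  | succ k ih =>
    refine succ_of_deriv ((hf.contDiffOn.add hh.contDiffOn).differentiableOn (by simp))
      (hf.subexpGrowth.add hh.subexpGrowth) ((ih hf.deriv hh.deriv).congr fun τ hτ => ?_)
    exact (deriv_fun_add (hf.differentiableAt hτ) (hh.differentiableAt hτ)).symm

lemma mul (hf : SubexpContDiff k f) (hh : SubexpContDiff k h) :
    SubexpContDiff k (fun τ => f τ * h τ) := by
  induction k generalizing f h with
  | zero =>
    exact zero_of_continuousOn (hf.contDiffOn.continuousOn.mul hh.contDiffOn.continuousOn)
      (hf.subexpGrowth.mul hh.subexpGrowth)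
  | succ k ih =>
    have hsum : SubexpContDiff k fun τ => deriv f τ * h τ + f τ * deriv h τ :=
      (ih hf.deriv (hh.of_le k.le_succ)).add (ih (hf.of_le k.le_succ) hh.deriv)
    refine succ_of_deriv ((hf.contDiffOn.mul hh.contDiffOn).differentiableOn (by simp))
      (hf.subexpGrowth.mul hh.subexpGrowth) (hsum.congr fun τ hτ => ?_)
    exact (deriv_fun_mul (hf.differentiableAt hτ) (hh.differentiableAt hτ)).symm

protected lemma eulerOpC (hf : SubexpContDiff (k + 1) f) : SubexpContDiff k (eulerOpC f) :=
  ofReal.mul hf.deriv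

protected lemma opProdC (L : List (ℂ × ℂ)) (hf : SubexpContDiff (k + L.length) f) :
    SubexpContDiff k (opProdC L f) := by
  induction L generalizing k with
  | nil => exact hf
  | cons p L ih =>
    have hL : SubexpContDiff (k + 1) (opProdC L f) :=
      ih (hf.of_le (by rw [List.length_cons]; lia))
    exact ((const p.1).mul hL.eulerOpC).add ((const p.2).mul (hL.of_le k.le_succ))

end SubexpContDiff

/-! ### The Laplace–Carson transform -/

/-- The Laplace transform `∫₀^∞ e^{-uτ} f(τ) dτ`, as a function of a real variable `u`; it takes
the junk value `0` where the integral diverges. -/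
noncomputable def laplace (f : ℝ → ℂ) (u : ℝ) : ℂ :=
  ∫ τ in Ioi (0 : ℝ), Complex.exp (-(u : ℂ) * (τ : ℂ)) * f τ

/-- The Laplace–Carson transform `u ∫₀^∞ e^{-uτ} f(τ) dτ`, normalized so that it sends the Euler
operator to its negative. -/
noncomputable def laplaceCarson (f : ℝ → ℂ) (u : ℝ) : ℂ := u * laplace f u

section Laplace

variable {f h : ℝ → ℂ} {u : ℝ}

lemma laplace_congr (hfh : EqOn f h (Ioi 0)) (u : ℝ) : laplace f u = laplace h u :=
  setIntegral_congr_fun measurableSet_Ioi fun τ hτ => by simp only [hfh hτ]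

lemma laplace_const_mul (c : ℂ) (f : ℝ → ℂ) (u : ℝ) :
    laplace (fun τ => c * f τ) u = c * laplace f u := by
  simp only [laplace, mul_left_comm _ c, integral_const_mul]

lemma SubexpGrowth.exists_norm_exp_mul_le (hf : SubexpGrowth f) {v : ℝ} (hv : 0 < v) :
    ∃ C, ∀ u ≥ v, ∀ τ : ℝ, 0 < τ →
      ‖Complex.exp (-(u : ℂ) * (τ : ℂ)) * f τ‖ ≤ C * Real.exp (-(v / 2) * τ) := by
  obtain ⟨C, hC⟩ := (hf (v / 2) (half_pos hv)).bound
  refine ⟨C, fun u hu τ hτ => ?_⟩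
  have hfτ : ‖f τ‖ ≤ C * Real.exp (v / 2 * τ) := by
    simpa using eventually_principal.1 hC τ hτ
  have hexp : ‖Complex.exp (-(u : ℂ) * (τ : ℂ))‖ ≤ Real.exp (-v * τ) := by
    rw [Complex.norm_exp, ← Complex.ofReal_neg, ← Complex.ofReal_mul, Complex.ofReal_re]
    gcongr
  calc ‖Complex.exp (-(u : ℂ) * (τ : ℂ)) * f τ‖
      ≤ Real.exp (-v * τ) * (C * Real.exp (v / 2 * τ)) := by
        rw [norm_mul]
        gcongr
    _ = C * Real.exp (-(v / 2) * τ) := by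
        rw [mul_left_comm, ← Real.exp_add]
        ring_nf

lemma aestronglyMeasurable_exp_mul (hm : AEStronglyMeasurable f (volume.restrict (Ioi 0)))
    (u : ℝ) : AEStronglyMeasurable (fun τ : ℝ => Complex.exp (-(u : ℂ) * (τ : ℂ)) * f τ)
      (volume.restrict (Ioi 0)) :=
  (by fun_prop : Continuous fun τ : ℝ => Complex.exp (-(u : ℂ) * (τ : ℂ))).aestronglyMeasurable.mul
    hm

lemma integrableOn_exp_mul (hm : AEStronglyMeasurable f (volume.restrict (Ioi 0)))
    (hf : SubexpGrowth f) (hu : 0 < u) :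
    IntegrableOn (fun τ : ℝ => Complex.exp (-(u : ℂ) * (τ : ℂ)) * f τ) (Ioi 0) := by
  obtain ⟨C, hC⟩ := hf.exists_norm_exp_mul_le hu
  refine ((integrableOn_exp_mul_Ioi (neg_lt_zero.2 (half_pos hu)) 0).const_mul C).mono'
    (aestronglyMeasurable_exp_mul hm u) ?_
  filter_upwards [ae_restrict_mem measurableSet_Ioi] with τ hτ using hC u le_rfl τ hτ

lemma laplace_add (hfm : AEStronglyMeasurable f (volume.restrict (Ioi 0))) (hf : SubexpGrowth f)
    (hhm : AEStronglyMeasurable h (volume.restrict (Ioi 0))) (hh : SubexpGrowth h) (hu : 0 < u) :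
    laplace (fun τ => f τ + h τ) u = laplace f u + laplace h u := by
  simp only [laplace, mul_add]
  exact integral_add (integrableOn_exp_mul hfm hf hu) (integrableOn_exp_mul hhm hh hu)

lemma hasDerivAt_laplace (hm : AEStronglyMeasurable f (volume.restrict (Ioi 0)))
    (hf : SubexpGrowth f) (hu : 0 < u) :
    HasDerivAt (laplace f) (-laplace (fun τ => (τ : ℂ) * f τ) u) u := by
  have hm' : AEStronglyMeasurable (fun τ : ℝ => (τ : ℂ) * f τ) (volume.restrict (Ioi 0)) :=
    Complex.continuous_ofReal.aestronglyMeasurable.mul hm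
  obtain ⟨C, hC⟩ := (SubexpGrowth.ofReal.mul hf).exists_norm_exp_mul_le (half_pos hu)
  have hbound : ∀ᵐ τ : ℝ ∂volume.restrict (Ioi 0), ∀ v ∈ Ioi (u / 2),
      ‖-(Complex.exp (-(v : ℂ) * (τ : ℂ)) * ((τ : ℂ) * f τ))‖ ≤
        C * Real.exp (-(u / 2 / 2) * τ) := by
    filter_upwards [ae_restrict_mem measurableSet_Ioi] with τ hτ v hv
    rw [norm_neg]
    exact hC v (le_of_lt hv) τ hτ
  have hderiv : ∀ τ v : ℝ, HasDerivAt (fun v : ℝ => Complex.exp (-(v : ℂ) * (τ : ℂ)) * f τ)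
      (-(Complex.exp (-(v : ℂ) * (τ : ℂ)) * ((τ : ℂ) * f τ))) v := fun τ v => by
    have hlin : HasDerivAt (fun v : ℝ => -(v : ℂ) * (τ : ℂ)) (-1 * τ) v :=
      Complex.ofRealCLM.hasDerivAt.fun_neg.mul_const _
    exact (hlin.cexp.mul_const (f τ)).congr_deriv (by ring)
  have hparam := (hasDerivAt_integral_of_dominated_loc_of_deriv_le
    (Ioi_mem_nhds (half_lt_self hu)) (Eventually.of_forall (aestronglyMeasurable_exp_mul hm))
    (integrableOn_exp_mul hm hf hu) (aestronglyMeasurable_exp_mul hm' u).neg hbound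
    ((integrableOn_exp_mul_Ioi (neg_lt_zero.2 (half_pos (half_pos hu))) 0).const_mul C)
    (Eventually.of_forall fun τ v _ => hderiv τ v)).2
  rwa [integral_neg] at hparam

lemma contDiffOn_laplace (hm : AEStronglyMeasurable f (volume.restrict (Ioi 0)))
    (hf : SubexpGrowth f) (k : ℕ) : ContDiffOn ℝ k (laplace f) (Ioi 0) := by
  induction k generalizing f with
  | zero =>
    exact contDiffOn_zero.2 fun u hu =>
      (hasDerivAt_laplace hm hf hu).continuousAt.continuousWithinAt
  | succ k ih =>
    push_cast
    refine (contDiffOn_succ_iff_deriv_of_isOpen isOpen_Ioi).2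
      ⟨fun u hu => (hasDerivAt_laplace hm hf hu).differentiableAt.differentiableWithinAt,
        by simp, ?_⟩
    exact (ih (Complex.continuous_ofReal.aestronglyMeasurable.mul hm)
      (SubexpGrowth.ofReal.mul hf)).neg.congr fun u hu => (hasDerivAt_laplace hm hf hu).deriv

lemma contDiffOn_laplaceCarson (hm : AEStronglyMeasurable f (volume.restrict (Ioi 0)))
    (hf : SubexpGrowth f) : ContDiffOn ℝ (⊤ : ℕ∞) (laplaceCarson f) (Ioi 0) :=
  Complex.ofRealCLM.contDiff.contDiffOn.mul (contDiffOn_infty.2 (contDiffOn_laplace hm hf))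

lemma laplace_deriv (hf : SubexpContDiff 1 f) (hf0 : Tendsto f (𝓝[>] 0) (𝓝 0)) (hu : 0 < u) :
    laplace (deriv f) u = u * laplace f u := by
  have hkernel : ∀ τ : ℝ, HasDerivAt (fun τ : ℝ => Complex.exp (-(u : ℂ) * (τ : ℂ)))
      (-(u : ℂ) * Complex.exp (-(u : ℂ) * (τ : ℂ))) τ := fun τ => by
    have hlin : HasDerivAt (fun τ : ℝ => -(u : ℂ) * (τ : ℂ)) (-(u : ℂ) * 1) τ :=
      Complex.ofRealCLM.hasDerivAt.const_mul _
    exact hlin.cexp.congr_deriv (by ring)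
  have hint : IntegrableOn (fun τ : ℝ => -(u : ℂ) * Complex.exp (-(u : ℂ) * (τ : ℂ)) * f τ)
      (Ioi 0) := by
    simpa only [mul_assoc, IntegrableOn] using
      (integrableOn_exp_mul hf.aestronglyMeasurable hf.subexpGrowth hu).const_mul (-(u : ℂ))
  have hzero : Tendsto (fun τ : ℝ => Complex.exp (-(u : ℂ) * (τ : ℂ)) * f τ) (𝓝[>] 0) (𝓝 0) := by
    simpa using ((hkernel 0).continuousAt.tendsto.mono_left nhdsWithin_le_nhds).mul hf0
  have hinfty : Tendsto (fun τ : ℝ => Complex.exp (-(u : ℂ) * (τ : ℂ)) * f τ) atTop (𝓝 0) := by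
    obtain ⟨C, hC⟩ := hf.subexpGrowth.exists_norm_exp_mul_le hu
    have hexp : Tendsto (fun τ : ℝ => C * Real.exp (-(u / 2) * τ)) atTop (𝓝 0) := by
      simpa using (Real.tendsto_exp_atBot.comp
        (tendsto_id.const_mul_atTop_of_neg (neg_lt_zero.2 (half_pos hu)))).const_mul C
    refine squeeze_zero_norm' ?_ hexp
    filter_upwards [eventually_gt_atTop 0] with τ hτ using hC u le_rfl τ hτ
  have hparts := integral_Ioi_mul_deriv_eq_deriv_mul (fun τ _ => hkernel τ)
    (fun τ hτ => (hf.differentiableAt hτ).hasDerivAt)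
    (integrableOn_exp_mul hf.deriv.aestronglyMeasurable hf.deriv.subexpGrowth hu) hint hzero hinfty
  simp only [mul_assoc, integral_const_mul] at hparts
  simp only [laplace, hparts]
  ring

lemma laplaceCarson_eulerOpC (hf : SubexpContDiff 1 f) (hu : 0 < u) :
    laplaceCarson (eulerOpC f) u = -eulerOpC (laplaceCarson f) u := by
  have hderiv : EqOn (deriv fun τ : ℝ => (τ : ℂ) * f τ) (fun τ => f τ + eulerOpC f τ) (Ioi 0) :=
    fun τ hτ => (hasDerivAt_ofReal_mul (hf.differentiableAt hτ)).deriv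
  have hparts : laplace f u + laplace (eulerOpC f) u =
      u * laplace (fun τ => (τ : ℂ) * f τ) u := by
    rw [← laplace_deriv (SubexpContDiff.ofReal.mul hf) hf.subexpGrowth.tendsto_ofReal_mul hu,
      laplace_congr hderiv, laplace_add hf.aestronglyMeasurable hf.subexpGrowth
        hf.eulerOpC.aestronglyMeasurable hf.eulerOpC.subexpGrowth hu]
  have hlaplace := hasDerivAt_laplace hf.aestronglyMeasurable hf.subexpGrowth hu
  have hcarson : deriv (laplaceCarson f) u = _ :=
    (hasDerivAt_ofReal_mul hlaplace.differentiableAt).deriv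
  simp only [eulerOpC, hcarson, hlaplace.deriv] at hparts ⊢
  simp only [laplaceCarson]
  linear_combination (u : ℂ) * hparts

lemma laplaceCarson_opProdC (L : List (ℂ × ℂ)) (hf : SubexpContDiff L.length f) :
    EqOn (laplaceCarson (opProdC L f)) (opProdC (L.map fun p => (-p.1, p.2)) (laplaceCarson f))
      (Ioi 0) := by
  induction L with
  | nil => exact fun u _ => rfl
  | cons p L ih =>
    have hL := ih (hf.of_le (by simp))
    intro u hu
    have hreg : SubexpContDiff 1 (opProdC L f) := .opProdC L (by rwa [add_comm])
    have hEuler := laplaceCarson_eulerOpC hreg hu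
    have hθ : SubexpContDiff 0 fun τ => p.1 * eulerOpC (opProdC L f) τ :=
      (SubexpContDiff.const p.1).mul hreg.eulerOpC
    have hid : SubexpContDiff 1 fun τ => p.2 * opProdC L f τ := (SubexpContDiff.const p.2).mul hreg
    simp only [opProdC_cons, List.map_cons, ← hL hu, ← eulerOpC_congr isOpen_Ioi hL hu]
    simp only [laplaceCarson] at hEuler ⊢
    rw [laplace_add hθ.aestronglyMeasurable hθ.subexpGrowth hid.aestronglyMeasurable
      hid.subexpGrowth hu, laplace_const_mul, laplace_const_mul]
    linear_combination p.1 * hEuler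

lemma laplaceCarson_iterate_deriv (r : ℕ) (hf : SubexpContDiff r f)
    (hf0 : ∀ j < r, Tendsto (deriv^[j] f) (𝓝[>] 0) (𝓝 0)) :
    EqOn (laplaceCarson (deriv^[r] f)) (fun u => (u : ℂ) ^ r * laplaceCarson f u) (Ioi 0) := by
  induction r with
  | zero => intro u _; simp
  | succ r ih =>
    intro u hu
    have hr := ih (hf.of_le r.le_succ) (fun j hj => hf0 j (hj.trans r.lt_succ_self)) hu
    have hreg : SubexpContDiff 1 (deriv^[r] f) := .iterate_deriv (by rwa [add_comm])
    simp only [laplaceCarson, Function.iterate_succ_apply',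
      laplace_deriv hreg (hf0 r r.lt_succ_self) hu] at hr ⊢
    rw [hr]
    ring

end Laplace

/-! ### The Picard–Fuchs equation -/

lemma opProdC_laplaceCarson_eq {A B : List (ℂ × ℂ)} {r n : ℕ} (hA : A.length ≤ n)
    (hB : B.length + r ≤ n) {g : ℝ → ℂ} (hg : SubexpContDiff n g)
    (hode : ∀ τ : ℝ, 0 < τ → (τ : ℂ) ^ r * opProdC A g τ =
      opProdC B (opProdC ((List.range r).map fun l : ℕ => (1, -(l : ℂ))) g) τ)
    (hg0 : ∀ j < r, Tendsto (deriv^[j] g) (𝓝[>] 0) (𝓝 0)) {u : ℝ} (hu : 0 < u) :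
    opProdC (A.map fun p => (-p.1, p.2)) (laplaceCarson g) u =
      (u : ℂ) ^ r * opProdC (B.map fun p => (-p.1, p.2)) (laplaceCarson g) u := by
  have hgB : SubexpContDiff (B.length + r) g := hg.of_le hB
  have hcancel := opProdC_eq_of_pow_mul_eq hgB.contDiffOn hode
  set B' := B.map fun p : ℂ × ℂ => (p.1, p.2 + r * p.1) with hB'
  have hsmooth : ContDiffOn ℝ (B'.map fun p => (-p.1, p.2)).length (laplaceCarson g) (Ioi 0) :=
    contDiffOn_infty.1 (contDiffOn_laplaceCarson hg.aestronglyMeasurable hg.subexpGrowth) _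
  calc opProdC (A.map fun p => (-p.1, p.2)) (laplaceCarson g) u
      = laplaceCarson (opProdC A g) u := (laplaceCarson_opProdC A (hg.of_le hA) hu).symm
    _ = laplaceCarson (opProdC B' (deriv^[r] g)) u := by
        rw [laplaceCarson, laplaceCarson, laplace_congr hcancel]
    _ = opProdC (B'.map fun p => (-p.1, p.2)) (laplaceCarson (deriv^[r] g)) u :=
        laplaceCarson_opProdC B' (by simpa [hB'] using hgB.iterate_deriv) hu
    _ = opProdC (B'.map fun p => (-p.1, p.2)) (fun v => (v : ℂ) ^ r * laplaceCarson g v) u :=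
        opProdC_congr isOpen_Ioi _
          (laplaceCarson_iterate_deriv r (hgB.of_le (Nat.le_add_left r _)) hg0) hu
    _ = (u : ℂ) ^ r * opProdC (B.map fun p => (-p.1, p.2)) (laplaceCarson g) u := by
        rw [opProdC_pow_mul isOpen_Ioi r _ hsmooth hu]
        simp [hB', Function.comp_def]

lemma opProdC_comp_rpow_one_div {r : ℕ} (hr : 0 < r) (L : List (ℂ × ℂ)) {f : ℝ → ℂ}
    (hf : ContDiffOn ℝ L.length f (Ioi 0)) {q : ℝ} (hq : 0 < q) :
    opProdC (L.map fun p => (-(r : ℂ) * p.1, p.2)) (fun q => f (q ^ ((1 : ℝ) / r))) q =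
      opProdC (L.map fun p => (-p.1, p.2)) f (q ^ ((1 : ℝ) / r)) := by
  have hr0 : (r : ℂ) ≠ 0 := Nat.cast_ne_zero.2 hr.ne'
  rw [opProdC_comp_rpow _ _ (by simpa using hf) hq]
  simp [Function.comp_def, hr0]

theorem stmt_14_general {A B : List (ℂ × ℂ)} {r n : ℕ} (hr : 0 < r) (hA : A.length ≤ n)
    (hB : B.length + r ≤ n) {g : ℝ → ℂ} (hg : SubexpContDiff n g)
    (hode : ∀ τ : ℝ, 0 < τ → (τ : ℂ) ^ r * opProdC A g τ =
      opProdC B (opProdC ((List.range r).map fun l : ℕ => (1, -(l : ℂ))) g) τ)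
    (hg0 : ∀ j < r, Tendsto (deriv^[j] g) (𝓝[>] 0) (𝓝 0)) {F G : ℝ → ℂ}
    (hF : ∀ u : ℝ, 0 < u →
      F u = (u : ℂ) * ∫ τ in Ioi (0 : ℝ), Complex.exp (-(u : ℂ) * (τ : ℂ)) * g τ)
    (hG : ∀ q : ℝ, 0 < q → G q = F (q ^ ((1 : ℝ) / r))) :
    (∀ u : ℝ, 0 < u →
      IntegrableOn (fun τ : ℝ => Complex.exp (-(u : ℂ) * (τ : ℂ)) * g τ) (Ioi 0)) ∧
    ContDiffOn ℝ (⊤ : ℕ∞) G (Ioi 0) ∧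
    ∀ q : ℝ, 0 < q → opProdC (A.map fun p => (-(r : ℂ) * p.1, p.2)) G q =
      (q : ℂ) * opProdC (B.map fun p => (-(r : ℂ) * p.1, p.2)) G q := by
  have hpos : ∀ q : ℝ, 0 < q → 0 < q ^ ((1 : ℝ) / r) := fun q hq => Real.rpow_pos_of_pos hq _
  have hGg : EqOn G (fun q => laplaceCarson g (q ^ ((1 : ℝ) / r))) (Ioi 0) := fun q hq =>
    (hG q hq).trans (hF _ (hpos q hq))
  have hsmooth := contDiffOn_laplaceCarson hg.aestronglyMeasurable hg.subexpGrowth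
  refine ⟨fun u hu => integrableOn_exp_mul hg.aestronglyMeasurable hg.subexpGrowth hu,
    (hsmooth.comp (fun q hq => ?_) hpos).congr hGg, fun q hq => ?_⟩
  · exact (Real.contDiffAt_rpow_const_of_ne (ne_of_gt hq)).contDiffWithinAt
  · have hroot : ((q ^ ((1 : ℝ) / r) : ℝ) : ℂ) ^ r = q := by
      rw [one_div, ← Complex.ofReal_pow, Real.rpow_inv_natCast_pow hq.le hr.ne']
    rw [opProdC_congr isOpen_Ioi _ hGg hq, opProdC_congr isOpen_Ioi _ hGg hq,
      opProdC_comp_rpow_one_div hr A (contDiffOn_infty.1 hsmooth _) hq,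
      opProdC_comp_rpow_one_div hr B (contDiffOn_infty.1 hsmooth _) hq,
      opProdC_laplaceCarson_eq hA hB hg hode hg0 (hpos q hq), hroot]

end

/-- Corollary 5.7 of the paper.  Setup as in Statement 12.  If `g` is a
solution of the regularized Picard–Fuchs equation with vanishing derivatives at `0⁺` and
polynomial growth, `F(u) = u·∫₀^∞ e^{−uτ} g(τ) dτ`, and `G(q) = F(q^{1/r})`, then `G` is
smooth on `(0,∞)` and satisfies the Picard–Fuchs equation of the blowup at `z = 1`:
`[∏_j ∏_{l<c_j}(c_j·θ_q − l − a^j)] G = q·[∏_{l<d}(−d·θ_q − dλ − l)] G`. -/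
theorem stmt_14 (N : ℕ) (hN : 1 ≤ N) (c : Fin N → ℕ) (d r : ℕ)
    (hc : ∀ j, 0 < c j) (hd : 0 < d) (hdvd : ∀ j, c j ∣ d)
    (hr : 0 < r) (hrsum : (∑ j, c j) = d + r)
    (a : Fin N → ℚ) (ha : ∀ j, 0 ≤ a j)
    (lam : ℂ) (n : ℕ) (hn : n = ∑ j, c j)
    (g : ℝ → ℂ)
    (hg_smooth : ContDiffOn ℝ (n : ℕ∞) g (Set.Ioi 0))
    (hode : ∀ τ : ℝ, 0 < τ →
      (τ : ℂ) ^ (r : ℕ) *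
        opProdC (((List.finRange N).map (fun j => (List.range (c j)).map
            (fun l => (-(c j : ℂ) / (r : ℂ), -(l : ℂ) - (a j : ℂ))))).flatten) g τ =
      opProdC ((List.range d).map (fun l => ((d : ℂ) / (r : ℂ), -(d : ℂ) * lam - (l : ℂ))))
        (opProdC ((List.range r).map (fun l => ((1 : ℂ), -(l : ℂ)))) g) τ)
    (hg0 : ∀ j ≤ n, Filter.Tendsto (deriv^[j] g) (nhdsWithin 0 (Set.Ioi 0)) (nhds 0))
    (hpoly : ∃ C p : ℝ, ∀ τ : ℝ, 0 < τ → ∀ j ≤ n, ‖deriv^[j] g τ‖ ≤ C * (1 + τ) ^ p)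
    (F G : ℝ → ℂ)
    (hF : ∀ u : ℝ, 0 < u →
      F u = (u : ℂ) * ∫ τ in Set.Ioi (0 : ℝ), Complex.exp (-(u : ℂ) * (τ : ℂ)) * g τ)
    (hG : ∀ q : ℝ, 0 < q → G q = F (q ^ ((1 : ℝ) / (r : ℝ)))) :
    (∀ u : ℝ, 0 < u →
      IntegrableOn (fun τ : ℝ => Complex.exp (-(u : ℂ) * (τ : ℂ)) * g τ) (Set.Ioi 0)) ∧
    ContDiffOn ℝ (⊤ : ℕ∞) G (Set.Ioi 0) ∧
    ∀ q : ℝ, 0 < q →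
      opProdC (((List.finRange N).map (fun j => (List.range (c j)).map
          (fun l => ((c j : ℂ), -(l : ℂ) - (a j : ℂ))))).flatten) G q =
        (q : ℂ) *
          opProdC ((List.range d).map
            (fun l => (-(d : ℂ), -(d : ℂ) * lam - (l : ℂ)))) G q := by
  -- A `List ℕ` used as a `List ℂ` elaborates to a `do` block in the list monad.
  simp only [bind_pure_comp, List.map_eq_map, List.map_map, Function.comp_def] at hode ⊢
  obtain ⟨C, p, hCp⟩ := hpoly
  have hreg : SubexpContDiff n g :=
    ⟨hg_smooth, fun j hj => .of_norm_le_rpow fun τ hτ => hCp τ hτ j hj⟩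
  have hlength : (((List.finRange N).map fun j => (List.range (c j)).map fun l : ℕ =>
      (-(c j : ℂ) / (r : ℂ), -(l : ℂ) - (a j : ℂ))).flatten).length = n := by
    simp [hn, Function.comp_def, Fin.sum_univ_def]
  have hscale : ∀ x : ℂ, -(r : ℂ) * (x / r) = -x := fun x => by
    rw [neg_mul, mul_div_cancel₀ x (Nat.cast_ne_zero.2 hr.ne')]
  have hmain := stmt_14_general hr hlength.le (by simp [hn, hrsum]) hreg hode
    (fun j hj => hg0 j (by lia)) hF hG
  simpa only [List.map_flatten, List.map_map, Function.comp_def, hscale, neg_neg] using hmain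
end
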